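/- For u, w, g ∈ {0,1} let n_{uwg} = ((−1)^g/√3)·((−1)^u, (−1)^{u+w}, (−1)^w) ∈ ℝ³ and let P_{uwg} = ½(I + n_{uwg}·σ) be the corresponding rank-one projector on ℂ², where n·σ = n_x σ_x + n_y σ_y + n_z σ_z with the Pauli matrices σ_x, σ_y, σ_z. Then the supremum over all POVMs (M_{uw})_{u,w∈{0,1}} on ℂ² of (1/4)·∑_{u,w∈{0,1}} tr(M_{uw} P_{uw0}) equals 1/2, and this value is attained by the POVM M_{uw} = ½·P_{uw0}. -/

import Mathlib

open Matrix ComplexOrder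

def pauliX : Matrix (Fin 2) (Fin 2) ℂ := !![0, 1; 1, 0]
def pauliY : Matrix (Fin 2) (Fin 2) ℂ := !![0, -Complex.I; Complex.I, 0]
def pauliZ : Matrix (Fin 2) (Fin 2) ℂ := !![1, 0; 0, -1]

/-- `n·σ = n_x σ_x + n_y σ_y + n_z σ_z` for a real vector `n`. -/
noncomputable def pauliVec (a b c : ℝ) : Matrix (Fin 2) (Fin 2) ℂ :=
  (a : ℂ) • pauliX + (b : ℂ) • pauliY + (c : ℂ) • pauliZ

/-- The 8-state projector `P_{uwg} = (I + n_{uwg}·σ)/2` with Bloch vector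
`n_{uwg} = ((-1)^g/√3)·((-1)^u, (-1)^{u+w}, (-1)^w)`. -/
noncomputable def P8 (u w g : Fin 2) : Matrix (Fin 2) (Fin 2) ℂ :=
  (1/2 : ℂ) • (1 + pauliVec
    ((-1:ℝ)^(g.val) * (-1:ℝ)^(u.val) / Real.sqrt 3)
    ((-1:ℝ)^(g.val) * (-1:ℝ)^(u.val + w.val) / Real.sqrt 3)
    ((-1:ℝ)^(g.val) * (-1:ℝ)^(w.val) / Real.sqrt 3))

/-!
Each state `P_b` is a projector, so `P_b ≤ 1` and `tr (M_b P_b) ≤ tr M_b` for every POVM `M`.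
Summing over `b`, the four terms add up to at most `tr 1 = 2`, whence the guessing probability is
at most `2/4`. Equality holds as soon as `M_b P_b = M_b` for all `b`, which any POVM with `M_b`
proportional to `P_b` satisfies. The Bloch vectors `n_b` sum to zero, so the `½ P_b` do form such
a POVM.
-/

theorem isStarProjection_half_smul_one_add {R A : Type*} [Field R] [NeZero (2 : R)] [StarRing R]
    [Ring A] [StarRing A] [Algebra R A] [StarModule R A] {a : A} (ha : IsSelfAdjoint a)
    (h_inv : a * a = 1) : IsStarProjection ((1 / 2 : R) • (1 + a)) where
  isIdempotentElem := by
    have h_sq : (1 + a) * (1 + a) = (2 : R) • (1 + a) := by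
      rw [mul_add, add_mul, add_mul, h_inv, two_smul]
      noncomm_ring
    rw [IsIdempotentElem, smul_mul_smul_comm, h_sq, smul_smul, mul_assoc,
      one_div_mul_cancel two_ne_zero, mul_one]
  isSelfAdjoint := .smul (by simp [IsSelfAdjoint]) (.add (.one A) ha)

section POVM

variable {ι n 𝕜 : Type*} [Fintype ι] [RCLike 𝕜]

open scoped MatrixOrder in
theorem posSemidef_of_isStarProjection [Fintype n] {P : Matrix n n 𝕜}
    (hP : IsStarProjection P) : P.PosSemidef :=
  nonneg_iff_posSemidef.1 hP.nonneg

open scoped MatrixOrder in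
theorem trace_mul_nonneg_of_posSemidef [Fintype n] {A B : Matrix n n 𝕜}
    (hA : A.PosSemidef) (hB : B.PosSemidef) : 0 ≤ (A * B).trace := by
  classical
  obtain ⟨C, rfl⟩ := CStarAlgebra.nonneg_iff_eq_star_mul_self.1 hB.nonneg
  rw [star_eq_conjTranspose, ← Matrix.mul_assoc, trace_mul_comm, ← Matrix.mul_assoc]
  exact (hA.mul_mul_conjTranspose_same C).trace_nonneg

variable [DecidableEq n]

theorem trace_mul_le_trace [Fintype n] {A B : Matrix n n 𝕜} (hA : A.PosSemidef)
    (hB : (1 - B).PosSemidef) : (A * B).trace ≤ A.trace := by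
  rw [← sub_nonneg, ← trace_sub, ← mul_one_sub]
  exact trace_mul_nonneg_of_posSemidef hA hB

/-- A positive operator-valued measure with outcomes in `ι`, that is, a measurement whose outcome is
used as the guess for the key labelling the state. -/
structure IsPOVM (M : ι → Matrix n n 𝕜) : Prop where
  posSemidef : ∀ i, (M i).PosSemidef
  sum_eq_one : ∑ i, M i = 1

namespace IsPOVM

variable {M ρ : ι → Matrix n n 𝕜}

theorem of_sum_eq_smul_one {c : 𝕜} (hc : 0 < c) (hρ : ∀ i, (ρ i).PosSemidef)
    (h_sum : ∑ i, ρ i = c • 1) : IsPOVM fun i => c⁻¹ • ρ i where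
  posSemidef i := (hρ i).smul (RCLike.inv_pos_of_pos hc).le
  sum_eq_one := by rw [← Finset.smul_sum, h_sum, inv_smul_smul₀ hc.ne']

variable [Fintype n]

theorem sum_trace (hM : IsPOVM M) : ∑ i, (M i).trace = Fintype.card n := by
  rw [← trace_sum, hM.sum_eq_one, trace_one]

theorem sum_trace_mul_le (hM : IsPOVM M) (hρ : ∀ i, (1 - ρ i).PosSemidef) :
    ∑ i, (M i * ρ i).trace ≤ Fintype.card n :=
  hM.sum_trace ▸ Finset.sum_le_sum fun i _ =>
    trace_mul_le_trace (hM.posSemidef i) (hρ i)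

end IsPOVM

/-- The probability of guessing a uniformly random key `i : ι` from one copy of the state `ρ i` by
measuring the POVM `M`. The traces are real when all `M i` and `ρ i` are Hermitian; taking the real
part only serves to land in `ℝ`. -/
noncomputable def guessProb [Fintype n] (ρ M : ι → Matrix n n 𝕜) : ℝ :=
  1 / Fintype.card ι * ∑ i, RCLike.re (M i * ρ i).trace

namespace IsPOVM

variable [Fintype n] {M ρ : ι → Matrix n n 𝕜}

theorem guessProb_le (hM : IsPOVM M) (hρ : ∀ i, (1 - ρ i).PosSemidef) :
    guessProb ρ M ≤ (Fintype.card n / Fintype.card ι : ℝ) := by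
  have h_le := RCLike.re_monotone (hM.sum_trace_mul_le hρ)
  rw [map_sum, RCLike.natCast_re] at h_le
  rw [guessProb, one_div_mul_eq_div]
  gcongr

theorem guessProb_eq (hM : IsPOVM M) (h_absorb : ∀ i, M i * ρ i = M i) :
    guessProb ρ M = (Fintype.card n / Fintype.card ι : ℝ) := by
  simp only [guessProb, h_absorb, ← map_sum, hM.sum_trace, RCLike.natCast_re,
    one_div_mul_eq_div]

end IsPOVM

end POVM

section Pauli

theorem pauliVec_eq (a b c : ℝ) :
    pauliVec a b c = !![(c : ℂ), a - b * Complex.I; a + b * Complex.I, -c] := by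
  simp [pauliVec, pauliX, pauliY, pauliZ, sub_eq_add_neg]

theorem isSelfAdjoint_pauliVec (a b c : ℝ) : IsSelfAdjoint (pauliVec a b c) := by
  rw [pauliVec_eq]
  ext i j
  fin_cases i <;> fin_cases j <;> simp [sub_eq_add_neg]

theorem pauliVec_mul_self (a b c : ℝ) :
    pauliVec a b c * pauliVec a b c = ((a ^ 2 + b ^ 2 + c ^ 2 : ℝ) : ℂ) • 1 := by
  have h_diag : (c : ℂ) * c + (a - b * Complex.I) * (a + b * Complex.I) =
      ((a ^ 2 + b ^ 2 + c ^ 2 : ℝ) : ℂ) := by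
    push_cast
    linear_combination -(b : ℂ) ^ 2 * Complex.I_sq
  rw [pauliVec_eq, mul_fin_two, one_fin_two, ← h_diag]
  simp only [smul_of, smul_cons, smul_empty, smul_eq_mul, mul_one, mul_zero]
  congr! 4 <;> ring_nf

theorem isStarProjection_half_smul_one_add_pauliVec {a b c : ℝ} (h : a ^ 2 + b ^ 2 + c ^ 2 = 1) :
    IsStarProjection ((1 / 2 : ℂ) • (1 + pauliVec a b c)) :=
  isStarProjection_half_smul_one_add (isSelfAdjoint_pauliVec a b c) <| by
    rw [pauliVec_mul_self, h, Complex.ofReal_one, one_smul]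

theorem sum_pauliVec {ι : Type*} (s : Finset ι) (a b c : ι → ℝ) :
    ∑ i ∈ s, pauliVec (a i) (b i) (c i) =
      pauliVec (∑ i ∈ s, a i) (∑ i ∈ s, b i) (∑ i ∈ s, c i) := by
  simp only [pauliVec, Finset.sum_add_distrib, ← Finset.sum_smul, Complex.ofReal_sum]

theorem sum_half_smul_one_add_pauliVec {ι : Type*} [Fintype ι] {a b c : ι → ℝ}
    (ha : ∑ i, a i = 0) (hb : ∑ i, b i = 0) (hc : ∑ i, c i = 0) :
    ∑ i, (1 / 2 : ℂ) • (1 + pauliVec (a i) (b i) (c i)) = (Fintype.card ι / 2 : ℂ) • 1 := by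
  have h_zero : pauliVec 0 0 0 = 0 := by simp [pauliVec]
  rw [← Finset.smul_sum, Finset.sum_add_distrib, sum_pauliVec, ha, hb, hc, h_zero, add_zero,
    Finset.sum_const, Finset.card_univ, ← Nat.cast_smul_eq_nsmul ℂ, smul_smul, one_div_mul_eq_div]

end Pauli

theorem isStarProjection_P8 (u w g : Fin 2) : IsStarProjection (P8 u w g) := by
  refine isStarProjection_half_smul_one_add_pauliVec ?_
  have h_sign (k : ℕ) : ((-1 : ℝ) ^ k) ^ 2 = 1 := by rw [pow_right_comm]; norm_num
  simp only [div_pow, mul_pow, h_sign, Real.sq_sqrt zero_le_three]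
  norm_num

theorem sum_P8 (g : Fin 2) : ∑ b : Fin 2 × Fin 2, P8 b.1 b.2 g = (2 : ℂ) • 1 := by
  have h_sign : ∑ k : Fin 2, (-1 : ℝ) ^ k.val = 0 := by simp
  have h_card : (Fintype.card (Fin 2 × Fin 2) : ℂ) / 2 = 2 := by norm_num
  rw [← h_card]
  apply sum_half_smul_one_add_pauliVec <;>
    simp only [← Finset.sum_div, ← Finset.mul_sum, Fintype.sum_prod_type, pow_add, h_sign,
      Finset.sum_const_zero, Finset.sum_const, smul_zero, ← Finset.smul_sum, mul_zero, zero_div]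

theorem isPOVM_half_smul_P8 (g : Fin 2) :
    IsPOVM fun b : Fin 2 × Fin 2 => (1 / 2 : ℂ) • P8 b.1 b.2 g := by
  simpa only [one_div] using IsPOVM.of_sum_eq_smul_one two_pos
    (fun b : Fin 2 × Fin 2 => posSemidef_of_isStarProjection (isStarProjection_P8 b.1 b.2 g))
    (sum_P8 g)

/-- **Attack K1 on 8-state encoding, min-entropy.** The optimal probability of
guessing the uniformly random basis key `(u,w)` from a qubit known to encode
`g = 0` equals `1/2`, attained by the POVM `M_{uw} = P_{uw0}/2`. -/
theorem stmt18 :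
    (sSup {g : ℝ | ∃ M : Fin 2 × Fin 2 → Matrix (Fin 2) (Fin 2) ℂ,
        (∀ b, (M b).PosSemidef) ∧ (∑ b, M b) = 1 ∧
        g = (1/4) * ∑ b, (M b * P8 b.1 b.2 0).trace.re} = 1/2) ∧
    ((∀ b : Fin 2 × Fin 2, ((1/2 : ℂ) • P8 b.1 b.2 0).PosSemidef) ∧
      (∑ b : Fin 2 × Fin 2, (1/2 : ℂ) • P8 b.1 b.2 0) = 1) ∧
    (1/4) * (∑ b : Fin 2 × Fin 2, (((1/2 : ℂ) • P8 b.1 b.2 0) * P8 b.1 b.2 0).trace.re)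
      = 1/2 := by
  let ρ (b : Fin 2 × Fin 2) := P8 b.1 b.2 0
  have hρ (b) : IsStarProjection (ρ b) := isStarProjection_P8 _ _ _
  have hM : IsPOVM fun b => (1 / 2 : ℂ) • ρ b := isPOVM_half_smul_P8 0
  have h_absorb (b) : (1 / 2 : ℂ) • ρ b * ρ b = (1 / 2 : ℂ) • ρ b := by
    rw [Matrix.smul_mul, (hρ b).isIdempotentElem.eq]
  have h_guess (M) : guessProb ρ M = (1 / 4) * ∑ b, (M b * ρ b).trace.re := by simp [guessProb]
  have h_bound : (Fintype.card (Fin 2) / Fintype.card (Fin 2 × Fin 2) : ℝ) = 1 / 2 := by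
    norm_num
  have h_value : (1 / 4) * ∑ b, ((1 / 2 : ℂ) • ρ b * ρ b).trace.re = 1 / 2 := by
    rw [← h_guess fun b => (1 / 2 : ℂ) • ρ b, hM.guessProb_eq h_absorb, h_bound]
  refine ⟨IsGreatest.csSup_eq ⟨⟨_, hM.posSemidef, hM.sum_eq_one, h_value.symm⟩, ?_⟩,
    ⟨hM.posSemidef, hM.sum_eq_one⟩, h_value⟩
  rintro _ ⟨N, hN, h_sum, rfl⟩
  exact h_guess N ▸ h_bound ▸ IsPOVM.guessProb_le ⟨hN, h_sum⟩ fun b =>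
    posSemidef_of_isStarProjection (hρ b).one_sub
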